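/- Let 𝔰, 𝔱, 𝔏 ∈ IPs. The set {(A,B) : A, B ⊆ ⋃𝔏, std(𝔏(A)) ≥ 𝔰, std(𝔏(B)) ≥ 𝔱} is the disjoint union, over all pairs (𝔤, C) with 𝔤 ∈ IPs, C ⊆ ⋃𝔏 and std(𝔏(C)) ≥ 𝔤, of the sets {(A,B) : A ∪ B = C, std(𝔏(A)) ≥ 𝔰, std(𝔏(B)) ≥ 𝔱, std(𝔏(A)_𝔰 ⋎ 𝔏(B)_𝔱) = 𝔤}. -/

import Mathlib

/-!
The piece indexed by `(𝔤, C)` determines `C = A ∪ B` and `𝔤 = std(𝔏(A)_𝔰 ⋎ 𝔏(B)_𝔱)`, so the pieces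
are pairwise disjoint and lie in the left-hand side. What has to be shown is that every pair
`(A, B)` of occurrences produces an admissible index, that is, `𝔤` is a standardized interval
partition and `𝔤 ≤ std(𝔏(A ∪ B))`.

* `refineTo_spec`: if `𝔰 ≤ std(𝓘)`, the refinement `𝓘_𝔰` exists; its blocks are the preimages of
  the blocks of `𝔰` under the standardization map.
* `glue_isIntervalPartition`: a union of intervals linked through intersections is an interval.
* `glue_le`: every block of `𝔏(A)_𝔰` or `𝔏(B)_𝔱` lies in a block of `𝔏(A ∪ B)`, since it is an
  interval inside `A ∪ B` and inside a block of `𝔏`. Intersecting blocks lie in the same one, so a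
  whole gluing class does.
* `stdIP_isStdIP` and `stdIP_mono` carry this over to standardizations.

Statements about the generated equivalence relations are proved by exhibiting an invariant
predicate (`eqvGen_invariant`).
-/


open Set

/-- A block: a nonempty interval of consecutive positive integers. -/
def IsIntervalBlock (B : Set ℕ) : Prop :=
  B.Nonempty ∧ (∀ x ∈ B, 1 ≤ x) ∧
    ∀ x ∈ B, ∀ z ∈ B, ∀ y : ℕ, x ≤ y → y ≤ z → y ∈ B

/-- An interval partition of a finite subset of the positive integers:
a family of pairwise disjoint nonempty intervals with finite ground set. -/
def IsIntervalPartition (P : Set (Set ℕ)) : Prop :=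
  (⋃₀ P).Finite ∧ (∀ B ∈ P, IsIntervalBlock B) ∧
    ∀ B ∈ P, ∀ C ∈ P, B ≠ C → B ∩ C = ∅

/-- An interval partition with prescribed ground set `A`. -/
def IsIntervalPartitionOf (P : Set (Set ℕ)) (A : Set ℕ) : Prop :=
  IsIntervalPartition P ∧ ⋃₀ P = A

/-- Standardized interval partitions: interval partitions of `{1, …, n}`. -/
def IsStdIP (P : Set (Set ℕ)) : Prop :=
  IsIntervalPartition P ∧ ∃ n : ℕ, ⋃₀ P = Set.Icc 1 n

/-- Refinement order: same ground set, and every block of `P`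
is contained in some block of `Q`. -/
def IPle (P Q : Set (Set ℕ)) : Prop :=
  ⋃₀ P = ⋃₀ Q ∧ ∀ B ∈ P, ∃ C ∈ Q, B ⊆ C

/-- The equivalence relation on blocks generated by having nonempty
intersection (among members of `S`). -/
def glueRel (S : Set (Set ℕ)) : Set ℕ → Set ℕ → Prop :=
  Relation.EqvGen fun X Y => X ∈ S ∧ Y ∈ S ∧ (X ∩ Y).Nonempty

/-- Gluing of two interval partitions. -/
def glue (P Q : Set (Set ℕ)) : Set (Set ℕ) :=
  (fun T => ⋃₀ {X ∈ P ∪ Q | glueRel (P ∪ Q) T X}) '' (P ∪ Q)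

/-- The relation on `A` generated by `y = x + 1`. -/
def cliqueRel (A : Set ℕ) : ℕ → ℕ → Prop :=
  Relation.EqvGen fun x y => x ∈ A ∧ y ∈ A ∧ y = x + 1

/-- `cliques A`: the coarsest interval partition of `A`. -/
def cliques (A : Set ℕ) : Set (Set ℕ) :=
  (fun x => {y ∈ A | cliqueRel A x y}) '' A

/-- `𝓘(A)`: the interval partition of `A ∩ ⋃₀ 𝓘` induced by `𝓘`. -/
def restrictIP (P : Set (Set ℕ)) (A : Set ℕ) : Set (Set ℕ) :=
  {Z | Z ≠ ∅ ∧ ∃ B ∈ P, ∃ c ∈ cliques A, Z = B ∩ c}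

/-- The unique order preserving map sending a finite `S ⊆ ℕ` onto `{1,…,|S|}`. -/
noncomputable def stdMap (S : Set ℕ) (x : ℕ) : ℕ := {y ∈ S | y ≤ x}.ncard

/-- Standardization of an interval partition. -/
noncomputable def stdIP (P : Set (Set ℕ)) : Set (Set ℕ) :=
  (fun B => stdMap (⋃₀ P) '' B) '' P

/-- Shifting all blocks of a partition up by `m`. -/
def shiftIP (m : ℕ) (P : Set (Set ℕ)) : Set (Set ℕ) :=
  (fun B => (fun x => x + m) '' B) '' P

/-- Concatenation of standardized interval partitions. -/
noncomputable def concatIP (P Q : Set (Set ℕ)) : Set (Set ℕ) :=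
  P ∪ shiftIP (⋃₀ P).ncard Q

/-- Quasi-shuffle section coefficient `c(𝔰,𝔱;𝔤)`. -/
noncomputable def secCoeff (s t g : Set (Set ℕ)) : ℕ :=
  {p : Set ℕ × Set ℕ | p.1 ∪ p.2 = ⋃₀ g ∧
      ∃ I I' : Set (Set ℕ), IsIntervalPartitionOf I p.1 ∧ IsIntervalPartitionOf I' p.2 ∧
        stdIP I = s ∧ stdIP I' = t ∧ glue I I' = g}.ncard

/-- The signature pairing `⟨IPC(𝔏), 𝔰⟩`. -/
noncomputable def IPC (L s : Set (Set ℕ)) : ℕ :=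
  {A : Set ℕ | A ⊆ ⋃₀ L ∧ IPle s (stdIP (restrictIP L A))}.ncard

open Classical in
/-- The unique refinement `𝓘_𝔰` of `𝓘` with standardization `𝔰` (junk value otherwise). -/
noncomputable def refineTo (P s : Set (Set ℕ)) : Set (Set ℕ) :=
  if h : ∃ Q : Set (Set ℕ), IsIntervalPartition Q ∧ IPle Q P ∧ stdIP Q = s then h.choose
  else ∅

/-- The concatenation of single blocks of the sizes listed in `l`. -/
noncomputable def concatList (l : List ℕ) : Set (Set ℕ) :=
  l.foldl (fun acc m => concatIP acc {Set.Icc 1 m}) ∅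

/-- A permutation of `{1,…,n}`, encoded as a function on `ℕ` fixing everything else. -/
def IsPermOf (n : ℕ) (σ : ℕ → ℕ) : Prop :=
  Set.BijOn σ (Set.Icc 1 n) (Set.Icc 1 n) ∧ ∀ x : ℕ, x ∉ Set.Icc 1 n → σ x = x

open Classical in
/-- The `i`-th smallest element of `A` (junk value otherwise). -/
noncomputable def nthElt (A : Set ℕ) (i : ℕ) : ℕ :=
  if h : ∃ x ∈ A, stdMap A x = i then h.choose else 0

/-- Standardization `st(Λ|_A)` of `Λ` restricted to `A`: the permutation of `{1,…,|A|}`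
recording the relative order of the values of `Λ` on `A`. -/
noncomputable def stdRestrict (lam : ℕ → ℕ) (A : Set ℕ) : ℕ → ℕ := fun i =>
  if 1 ≤ i ∧ i ≤ A.ncard then {b ∈ A | lam b ≤ lam (nthElt A i)}.ncard else i

/-- Concatenation `σ ⊡ τ` of permutations of `{1,…,m}` and `{1,…,n}`. -/
def permConcat (m n : ℕ) (σ τ : ℕ → ℕ) : ℕ → ℕ := fun i =>
  if 1 ≤ i ∧ i ≤ m then σ i
  else if m + 1 ≤ i ∧ i ≤ m + n then τ (i - m) + m
  else i

/-- A vincular pattern: a standardized interval partition of `{1,…,n}`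
together with a permutation of `{1,…,n}`. -/
def IsVincular (p : Set (Set ℕ) × (ℕ → ℕ)) : Prop :=
  ∃ n : ℕ, IsIntervalPartitionOf p.1 (Set.Icc 1 n) ∧ IsPermOf n p.2

/-- Concatenation of vincular patterns. -/
noncomputable def vincConcat (p q : Set (Set ℕ) × (ℕ → ℕ)) : Set (Set ℕ) × (ℕ → ℕ) :=
  (concatIP p.1 q.1, permConcat (⋃₀ p.1).ncard (⋃₀ q.1).ncard p.2 q.2)

/-- Vincular section coefficient `C((𝔰,σ),(𝔱,τ);(𝔤,γ))`. -/
noncomputable def vincCoeff (p q r : Set (Set ℕ) × (ℕ → ℕ)) : ℕ :=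
  {AB : Set ℕ × Set ℕ | AB.1 ∪ AB.2 = ⋃₀ r.1 ∧
      (∃ I I' : Set (Set ℕ), IsIntervalPartitionOf I AB.1 ∧ IsIntervalPartitionOf I' AB.2 ∧
        stdIP I = p.1 ∧ stdIP I' = q.1 ∧ glue I I' = r.1) ∧
      stdRestrict r.2 AB.1 = p.2 ∧ stdRestrict r.2 AB.2 = q.2}.ncard

/-- Vincular signature pairing `⟨GPC(𝔏,Λ), (𝔰,σ)⟩`. -/
noncomputable def GPC (L : Set (Set ℕ)) (lam : ℕ → ℕ) (p : Set (Set ℕ) × (ℕ → ℕ)) : ℕ :=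
  {A : Set ℕ | A ⊆ ⋃₀ L ∧ IPle p.1 (stdIP (restrictIP L A)) ∧ stdRestrict lam A = p.2}.ncard

/-- The index set of pairs `(𝔤, C)` with `𝔤` standardized, `C ⊆ ⋃𝔏` and
`std(𝔏(C)) ≥ 𝔤`. -/
noncomputable def idx12 (L : Set (Set ℕ)) : Set (Set (Set ℕ) × Set ℕ) :=
  {gc | IsStdIP gc.1 ∧ gc.2 ⊆ ⋃₀ L ∧ IPle gc.1 (stdIP (restrictIP L gc.2))}

/-- The piece of the decomposition indexed by `(𝔤, C)`. -/
noncomputable def piece12 (s t L : Set (Set ℕ)) (gc : Set (Set ℕ) × Set ℕ) :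
    Set (Set ℕ × Set ℕ) :=
  {p | p.1 ∪ p.2 = gc.2 ∧
    IPle s (stdIP (restrictIP L p.1)) ∧ IPle t (stdIP (restrictIP L p.2)) ∧
    stdIP (glue (refineTo (restrictIP L p.1) s) (refineTo (restrictIP L p.2) t)) = gc.1}

/-- A predicate preserved by the generating relation is preserved by the generated equivalence. -/
theorem eqvGen_invariant {α : Type*} {r : α → α → Prop} {f : α → Prop}
    (hf : ∀ a b, r a b → (f a ↔ f b)) {a b : α} (h : Relation.EqvGen r a b) : f a ↔ f b := by
  induction h with
  | rel a b h => exact hf a b h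
  | refl a => exact Iff.rfl
  | symm a b _ ih => exact ih.symm
  | trans a b c _ _ ih₁ ih₂ => exact ih₁.trans ih₂

/-! ### The standardization map -/

theorem stdMap_mono {A : Set ℕ} (hA : A.Finite) {x y : ℕ} (h : x ≤ y) :
    stdMap A x ≤ stdMap A y :=
  Set.ncard_le_ncard (fun _ hz => ⟨hz.1, hz.2.trans h⟩) (hA.subset fun _ hz => hz.1)

theorem stdMap_lt {A : Set ℕ} (hA : A.Finite) {x y : ℕ} (hy : y ∈ A) (h : x < y) :
    stdMap A x < stdMap A y := by
  apply Set.ncard_lt_ncard _ (hA.subset fun _ hz => hz.1)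
  refine ⟨fun _ hz => ⟨hz.1, hz.2.trans h.le⟩, fun hsub => ?_⟩
  exact absurd (hsub (show y ∈ {z ∈ A | z ≤ y} from ⟨hy, le_rfl⟩)).2 (not_le.2 h)

theorem stdMap_le_iff {A : Set ℕ} (hA : A.Finite) {x y : ℕ} (hx : x ∈ A) :
    stdMap A x ≤ stdMap A y ↔ x ≤ y :=
  ⟨fun h => not_lt.1 fun h' => absurd (stdMap_lt hA hx h') (not_lt.2 h), stdMap_mono hA⟩

theorem stdMap_injOn {A : Set ℕ} (hA : A.Finite) : Set.InjOn (stdMap A) A := fun _ hx _ hy h =>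
  le_antisymm ((stdMap_le_iff hA hx).1 h.le) ((stdMap_le_iff hA hy).1 h.ge)

theorem stdMap_image {A : Set ℕ} (hA : A.Finite) : stdMap A '' A = Set.Icc 1 A.ncard := by
  apply Set.eq_of_subset_of_ncard_le _ _ (Set.finite_Icc _ _)
  · rintro _ ⟨x, hx, rfl⟩
    refine ⟨?_, Set.ncard_le_ncard (fun _ hz => hz.1) hA⟩
    exact (Set.ncard_pos (hA.subset fun _ hz => hz.1)).2 ⟨x, hx, le_rfl⟩
  · rw [(stdMap_injOn hA).ncard_image]
    rw [← Finset.coe_Icc, Set.ncard_coe_finset, Nat.card_Icc, Nat.add_sub_cancel]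

theorem sUnion_stdIP (P : Set (Set ℕ)) : ⋃₀ stdIP P = stdMap (⋃₀ P) '' ⋃₀ P := by
  rw [stdIP, Set.sUnion_image, Set.sUnion_eq_biUnion, Set.image_iUnion₂]

theorem stdIP_isStdIP {P : Set (Set ℕ)} (hP : IsIntervalPartition P) : IsStdIP (stdIP P) := by
  obtain ⟨hfin, hblk, hdisj⟩ := hP
  have hU : ⋃₀ stdIP P = Set.Icc 1 (⋃₀ P).ncard := by rw [sUnion_stdIP, stdMap_image hfin]
  refine ⟨⟨hU ▸ Set.finite_Icc _ _, ?_, ?_⟩, _, hU⟩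
  · rintro _ ⟨B, hB, rfl⟩
    obtain ⟨hne, h1, hint⟩ := hblk B hB
    have hle : ∀ x ∈ stdMap (⋃₀ P) '' B, x ∈ Set.Icc 1 (⋃₀ P).ncard := by
      rw [← stdMap_image hfin]
      exact fun x hx => Set.image_mono (Set.subset_sUnion_of_mem hB) hx
    refine ⟨hne.image _, fun x hx => (hle x hx).1, ?_⟩
    intro x hx z hz k hxk hkz
    have hk : k ∈ stdMap (⋃₀ P) '' ⋃₀ P := by
      rw [stdMap_image hfin]
      exact ⟨(hle x hx).1.trans hxk, hkz.trans (hle z hz).2⟩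
    obtain ⟨y, hy, rfl⟩ := hk
    obtain ⟨x, hx, rfl⟩ := hx
    obtain ⟨z, hz, rfl⟩ := hz
    exact ⟨y, hint x hx z hz y ((stdMap_le_iff hfin ⟨B, hB, hx⟩).1 hxk)
      ((stdMap_le_iff hfin hy).1 hkz), rfl⟩
  · rintro _ ⟨B, hB, rfl⟩ _ ⟨C, hC, rfl⟩ hne
    have hBC : B ∩ C = ∅ := hdisj B hB C hC fun h => hne (by rw [h])
    have h := (stdMap_injOn hfin).image_inter (Set.subset_sUnion_of_mem hB)
      (Set.subset_sUnion_of_mem hC)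
    rw [← h, hBC, Set.image_empty]

theorem stdIP_mono {P Q : Set (Set ℕ)} (h : IPle P Q) : IPle (stdIP P) (stdIP Q) := by
  refine ⟨by rw [sUnion_stdIP, sUnion_stdIP, h.1], ?_⟩
  rintro _ ⟨B, hB, rfl⟩
  obtain ⟨C, hC, hBC⟩ := h.2 B hB
  exact ⟨_, ⟨C, hC, rfl⟩, by simpa only [h.1] using Set.image_mono hBC⟩

/-! ### Existence of the refinement with prescribed standardization -/

theorem refineTo_spec {P s : Set (Set ℕ)} (hP : IsIntervalPartition P) (hs : IsIntervalPartition s)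
    (h : IPle s (stdIP P)) :
    IsIntervalPartition (refineTo P s) ∧ IPle (refineTo P s) P := by
  have key : ∃ Q : Set (Set ℕ), IsIntervalPartition Q ∧ IPle Q P ∧ stdIP Q = s := by
    obtain ⟨hfin, hblk, hdisj⟩ := hP
    obtain ⟨hU, hle⟩ := h
    rw [sUnion_stdIP] at hU
    -- the blocks of the refinement are the preimages of the blocks of `s` in the ground set of `P`
    set A := ⋃₀ P with hA
    let q : Set ℕ → Set ℕ := fun b => A ∩ stdMap A ⁻¹' b
    have himg : ∀ b ∈ s, stdMap A '' q b = b := by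
      intro b hb
      have hsub : b ⊆ stdMap A '' A := hU ▸ Set.subset_sUnion_of_mem hb
      simp only [q, Set.image_inter_preimage]
      exact Set.inter_eq_right.2 hsub
    have hQU : ⋃₀ (q '' s) = A := by
      ext x
      constructor
      · rintro ⟨_, ⟨b, _, rfl⟩, hx⟩
        exact hx.1
      · intro hx
        have hx' : stdMap A x ∈ ⋃₀ s := hU ▸ Set.mem_image_of_mem _ hx
        obtain ⟨b, hb, hxb⟩ := hx'
        exact ⟨_, ⟨b, hb, rfl⟩, hx, hxb⟩
    have hQle : ∀ B ∈ q '' s, ∃ C ∈ P, B ⊆ C := by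
      rintro _ ⟨b, hb, rfl⟩
      obtain ⟨_, ⟨C, hC, rfl⟩, hbC⟩ := hle b hb
      refine ⟨C, hC, fun x hx => ?_⟩
      obtain ⟨y, hy, hxy⟩ := hbC hx.2
      exact stdMap_injOn hfin ⟨C, hC, hy⟩ hx.1 hxy ▸ hy
    refine ⟨q '' s, ⟨hQU.symm ▸ hfin, ?_, ?_⟩, ⟨hQU, hQle⟩, ?_⟩
    · intro B hB
      obtain ⟨C, hC, hBC⟩ := hQle B hB
      obtain ⟨b, hb, rfl⟩ := hB
      obtain ⟨_, h1, hint⟩ := hblk C hC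
      refine ⟨?_, fun x hx => h1 x (hBC hx), fun x hx z hz y hxy hyz => ?_⟩
      · exact Set.image_nonempty.1 ((himg b hb).symm ▸ (hs.2.1 b hb).1)
      · exact ⟨⟨C, hC, hint x (hBC hx) z (hBC hz) y hxy hyz⟩,
          (hs.2.1 b hb).2.2 _ hx.2 _ hz.2 _ (stdMap_mono hfin hxy) (stdMap_mono hfin hyz)⟩
    · rintro _ ⟨b, hb, rfl⟩ _ ⟨c, hc, rfl⟩ hne
      have hbc : b ∩ c = ∅ := hs.2.2 b hb c hc fun h => hne (by rw [h])
      ext x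
      refine ⟨fun hx => ?_, False.elim⟩
      exact (hbc ▸ (⟨hx.1.2, hx.2.2⟩ : stdMap A x ∈ b ∩ c) : stdMap A x ∈ (∅ : Set ℕ))
    · rw [stdIP, hQU, Set.image_image]
      exact (Set.image_congr himg).trans (Set.image_id' s)
  rw [refineTo, dif_pos key]
  exact ⟨key.choose_spec.1, key.choose_spec.2.1⟩

/-! ### Cliques and the induced partition -/

theorem cliqueRel_of_Icc_subset {A : Set ℕ} {x y : ℕ} (hxy : x ≤ y) (h : Set.Icc x y ⊆ A) :
    cliqueRel A x y := by
  induction y, hxy using Nat.le_induction with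
  | base => exact Relation.EqvGen.refl x
  | succ n hn ih =>
    refine Relation.EqvGen.trans _ n _ (ih fun z hz => h ⟨hz.1, hz.2.trans n.le_succ⟩) ?_
    exact Relation.EqvGen.rel _ _ ⟨h ⟨hn, n.le_succ⟩, h ⟨hn.trans n.le_succ, le_rfl⟩, rfl⟩

/-- A missing point `y ∉ A` separates cliques: the predicate `· < y` is invariant. -/
theorem Icc_subset_of_cliqueRel {A : Set ℕ} {x z : ℕ} (hx : x ∈ A)
    (h : cliqueRel A x z) : Set.Icc x z ⊆ A := by
  intro y hy
  by_contra hyA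
  have hf : x < y ↔ z < y := by
    refine eqvGen_invariant (f := fun w => w < y) ?_ h
    rintro a b ⟨ha, hb, rfl⟩
    have h1 : a ≠ y := fun h => hyA (h ▸ ha)
    have h2 : a + 1 ≠ y := fun h => hyA (h ▸ hb)
    omega
  have h1 : x ≠ y := fun h => hyA (h ▸ hx)
  have := hy.1
  have := hy.2
  omega

theorem sUnion_restrictIP {L : Set (Set ℕ)} {A : Set ℕ} (hA : A ⊆ ⋃₀ L) :
    ⋃₀ restrictIP L A = A := by
  ext x
  constructor
  · rintro ⟨_, ⟨_, B, _, _, ⟨a, _, rfl⟩, rfl⟩, hx⟩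
    exact hx.2.1
  · intro hx
    obtain ⟨B, hB, hxB⟩ := hA hx
    have hmem : x ∈ B ∩ {y ∈ A | cliqueRel A x y} := ⟨hxB, hx, Relation.EqvGen.refl x⟩
    exact ⟨_, ⟨Set.Nonempty.ne_empty ⟨x, hmem⟩, B, hB, _, ⟨x, hx, rfl⟩, rfl⟩, hmem⟩

theorem restrictIP_isIntervalPartition {L : Set (Set ℕ)} {A : Set ℕ} (hL : IsIntervalPartition L)
    (hA : A ⊆ ⋃₀ L) : IsIntervalPartition (restrictIP L A) := by
  obtain ⟨hfin, hblk, hdisj⟩ := hL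
  refine ⟨(sUnion_restrictIP hA).symm ▸ hfin.subset hA, ?_, ?_⟩
  · rintro _ ⟨hne, B, hB, _, ⟨a, ha, rfl⟩, rfl⟩
    refine ⟨Set.nonempty_iff_ne_empty.2 hne, fun x hx => (hblk B hB).2.1 x hx.1, ?_⟩
    rintro x ⟨hxB, hxA, hax⟩ z ⟨hzB, hzA, haz⟩ y hxy hyz
    have hsub := Icc_subset_of_cliqueRel hxA ((hax.symm _ _).trans _ _ _ haz)
    refine ⟨(hblk B hB).2.2 x hxB z hzB y hxy hyz, hsub ⟨hxy, hyz⟩, hax.trans _ _ _ ?_⟩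
    exact cliqueRel_of_Icc_subset hxy fun w hw => hsub ⟨hw.1, hw.2.trans hyz⟩
  · rintro _ ⟨_, B, hB, _, ⟨a, ha, rfl⟩, rfl⟩ _ ⟨_, C, hC, _, ⟨b, hb, rfl⟩, rfl⟩ hne
    by_contra hcon
    obtain ⟨w, ⟨hwB, hwA, haw⟩, hwC, _, hbw⟩ := Set.nonempty_iff_ne_empty.2 hcon
    apply hne
    have hBC : B = C := by
      by_contra h
      exact (hdisj B hB C hC h ▸ (⟨hwB, hwC⟩ : w ∈ B ∩ C) : w ∈ (∅ : Set ℕ))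
    have hab : cliqueRel A a b := haw.trans _ _ _ (hbw.symm _ _)
    subst hBC
    ext y
    exact ⟨fun hy => ⟨hy.1, hy.2.1, (hab.symm _ _).trans _ _ _ hy.2.2⟩,
      fun hy => ⟨hy.1, hy.2.1, hab.trans _ _ _ hy.2.2⟩⟩

/-- A block contained in `C` and in a block of `L` is contained in a block of the partition
induced by `L` on `C`. -/
theorem exists_restrictIP_superset {L : Set (Set ℕ)} {C X B : Set ℕ} (hX : IsIntervalBlock X)
    (hB : B ∈ L) (hXB : X ⊆ B) (hXC : X ⊆ C) : ∃ D ∈ restrictIP L C, X ⊆ D := by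
  obtain ⟨⟨x, hx⟩, _, hint⟩ := hX
  have hsub : X ⊆ B ∩ {y ∈ C | cliqueRel C x y} := by
    intro y hy
    refine ⟨hXB hy, hXC hy, ?_⟩
    rcases le_total x y with hxy | hyx
    · exact cliqueRel_of_Icc_subset hxy fun w hw => hXC (hint x hx y hy w hw.1 hw.2)
    · exact (cliqueRel_of_Icc_subset hyx
        fun w hw => hXC (hint y hy x hx w hw.1 hw.2)).symm _ _
  exact ⟨_, ⟨Set.Nonempty.ne_empty ⟨x, hsub hx⟩, B, hB, _, ⟨x, hXC hx, rfl⟩, rfl⟩, hsub⟩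

theorem restrictIP_mono {L : Set (Set ℕ)} {A C X Z : Set ℕ} (hX : IsIntervalBlock X)
    (hAC : A ⊆ C) (hZ : Z ∈ restrictIP L A) (hXZ : X ⊆ Z) : ∃ D ∈ restrictIP L C, X ⊆ D := by
  obtain ⟨_, B, hB, _, ⟨a, _, rfl⟩, rfl⟩ := hZ
  exact exists_restrictIP_superset hX hB (fun x hx => (hXZ hx).1)
    fun x hx => hAC (hXZ hx).2.1

/-! ### Gluing -/

theorem sUnion_glue (P Q : Set (Set ℕ)) : ⋃₀ glue P Q = ⋃₀ P ∪ ⋃₀ Q := by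
  rw [← Set.sUnion_union]
  ext x
  constructor
  · rintro ⟨_, ⟨T, _, rfl⟩, X, hX, hx⟩
    exact ⟨X, hX.1, hx⟩
  · rintro ⟨X, hX, hx⟩
    exact ⟨_, ⟨X, hX, rfl⟩, X, ⟨hX, Relation.EqvGen.refl X⟩, hx⟩

theorem glue_isIntervalPartition {P Q : Set (Set ℕ)} (hP : IsIntervalPartition P)
    (hQ : IsIntervalPartition Q) : IsIntervalPartition (glue P Q) := by
  have hblk : ∀ X ∈ P ∪ Q, IsIntervalBlock X := by
    rintro X (hX | hX)
    exacts [hP.2.1 X hX, hQ.2.1 X hX]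
  refine ⟨sUnion_glue P Q ▸ hP.1.union hQ.1, ?_, ?_⟩
  · rintro _ ⟨T, hT, rfl⟩
    refine ⟨?_, ?_, ?_⟩
    · obtain ⟨x, hx⟩ := (hblk T hT).1
      exact ⟨x, T, ⟨hT, Relation.EqvGen.refl T⟩, hx⟩
    · rintro x ⟨X, hX, hx⟩
      exact (hblk X hX.1).2.1 x hx
    · rintro x ⟨X, ⟨hX, hTX⟩, hx⟩ z ⟨Z, ⟨hZ, hTZ⟩, hz⟩ y hxy hyz
      by_contra hy
      have hyn : ∀ W ∈ P ∪ Q, glueRel (P ∪ Q) T W → y ∉ W :=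
        fun W hW hTW hyW => hy ⟨W, ⟨hW, hTW⟩, hyW⟩
      have hxy' : x < y := lt_of_le_of_ne hxy fun h => hyn X hX hTX (h ▸ hx)
      -- If no block of the class contains `y`, then having a point below `y` passes between
      -- intersecting blocks of the class.
      have step : ∀ V W, V ∈ P ∪ Q → W ∈ P ∪ Q → (V ∩ W).Nonempty →
          (glueRel (P ∪ Q) T V ∧ ∃ v ∈ V, v < y) → glueRel (P ∪ Q) T W ∧ ∃ v ∈ W, v < y := by
        rintro V W hV hW ⟨w, hwV, hwW⟩ ⟨hTV, v, hv, hvy⟩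
        refine ⟨hTV.trans _ _ _ (.rel _ _ ⟨hV, hW, w, hwV, hwW⟩), w, hwW, ?_⟩
        by_contra hwy
        exact hyn V hV hTV ((hblk V hV).2.2 v hv w hwV y hvy.le (not_lt.1 hwy))
      have hinv := eqvGen_invariant (f := fun V => glueRel (P ∪ Q) T V ∧ ∃ v ∈ V, v < y)
        (fun V W hVW => ⟨step V W hVW.1 hVW.2.1 hVW.2.2,
          step W V hVW.2.1 hVW.1 (Set.inter_comm V W ▸ hVW.2.2)⟩)
        ((hTX.symm _ _).trans _ _ _ hTZ)
      obtain ⟨_, v, hv, hvy⟩ := hinv.1 ⟨hTX, x, hx, hxy'⟩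
      exact hyn Z hZ hTZ ((hblk Z hZ).2.2 v hv z hz y hvy.le hyz)
  · rintro _ ⟨T, hT, rfl⟩ _ ⟨T', hT', rfl⟩ hne
    by_contra hcon
    obtain ⟨w, ⟨X, ⟨hX, hTX⟩, hwX⟩, X', ⟨hX', hTX'⟩, hwX'⟩ := Set.nonempty_iff_ne_empty.2 hcon
    have hTT' : glueRel (P ∪ Q) T T' :=
      (hTX.trans _ _ _ (.rel _ _ ⟨hX, hX', w, hwX, hwX'⟩)).trans _ _ _ (hTX'.symm _ _)
    apply hne
    refine congrArg Set.sUnion (Set.ext fun Y => ?_)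
    exact ⟨fun hY => ⟨hY.1, (hTT'.symm _ _).trans _ _ _ hY.2⟩,
      fun hY => ⟨hY.1, hTT'.trans _ _ _ hY.2⟩⟩

/-- Gluing stays below any interval partition `R` of the joint ground set such that each block of
`P` and of `Q` lies in a block of `R`: being contained in a fixed block of `R` is invariant under
intersection of blocks. -/
theorem glue_le {P Q R : Set (Set ℕ)} (hR : IsIntervalPartition R)
    (hU : ⋃₀ P ∪ ⋃₀ Q = ⋃₀ R) (h : ∀ X ∈ P ∪ Q, ∃ D ∈ R, X ⊆ D) : IPle (glue P Q) R := by
  refine ⟨(sUnion_glue P Q).trans hU, ?_⟩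
  rintro _ ⟨T, hT, rfl⟩
  obtain ⟨D, hD, hTD⟩ := h T hT
  refine ⟨D, hD, Set.sUnion_subset fun X hX => ?_⟩
  have step : ∀ V W, W ∈ P ∪ Q → (V ∩ W).Nonempty → V ⊆ D → W ⊆ D := by
    rintro V W hW ⟨w, hwV, hwW⟩ hVD
    obtain ⟨E, hE, hWE⟩ := h W hW
    have hDE : D = E := by
      by_contra hne
      exact (hR.2.2 D hD E hE hne ▸ (⟨hVD hwV, hWE hwW⟩ : w ∈ D ∩ E) : w ∈ (∅ : Set ℕ))
    exact hDE ▸ hWE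
  exact (eqvGen_invariant (f := fun V => V ⊆ D) (fun V W hVW => ⟨step V W hVW.2.1 hVW.2.2,
    step W V hVW.1 (Set.inter_comm V W ▸ hVW.2.2)⟩) hX.2).1 hTD

/-- the pairs of occurrence sets decompose as a disjoint union
indexed by the pairs `(𝔤, C)`. -/
theorem occurrencePairs_disjoint_union (s t L : Set (Set ℕ))
    (hs : IsStdIP s) (ht : IsStdIP t) (hL : IsStdIP L) :
    ({p : Set ℕ × Set ℕ | p.1 ⊆ ⋃₀ L ∧ p.2 ⊆ ⋃₀ L ∧
        IPle s (stdIP (restrictIP L p.1)) ∧ IPle t (stdIP (restrictIP L p.2))}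
      = ⋃ gc ∈ idx12 L, piece12 s t L gc) ∧
    (idx12 L).PairwiseDisjoint (piece12 s t L) := by
  refine ⟨Set.Subset.antisymm ?_ ?_, ?_⟩
  · rintro ⟨A, B⟩ ⟨hA, hB, hsA, htB⟩
    dsimp only at hA hB hsA htB
    have hC : A ∪ B ⊆ ⋃₀ L := Set.union_subset hA hB
    obtain ⟨hI, hIle⟩ := refineTo_spec (restrictIP_isIntervalPartition hL.1 hA) hs.1 hsA
    obtain ⟨hJ, hJle⟩ := refineTo_spec (restrictIP_isIntervalPartition hL.1 hB) ht.1 htB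
    refine Set.mem_iUnion₂.2 ⟨(stdIP (glue (refineTo (restrictIP L A) s)
      (refineTo (restrictIP L B) t)), A ∪ B), ⟨?_, hC, ?_⟩, rfl, hsA, htB, rfl⟩
    · exact stdIP_isStdIP (glue_isIntervalPartition hI hJ)
    · refine stdIP_mono (glue_le (restrictIP_isIntervalPartition hL.1 hC) ?_ ?_)
      · rw [hIle.1, hJle.1, sUnion_restrictIP hA, sUnion_restrictIP hB, sUnion_restrictIP hC]
      · rintro X (hX | hX)
        · obtain ⟨Z, hZ, hXZ⟩ := hIle.2 X hX
          exact restrictIP_mono (hI.2.1 X hX) Set.subset_union_left hZ hXZ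
        · obtain ⟨Z, hZ, hXZ⟩ := hJle.2 X hX
          exact restrictIP_mono (hJ.2.1 X hX) Set.subset_union_right hZ hXZ
  · rintro p hp
    obtain ⟨gc, ⟨_, hC, _⟩, hU, hsA, htB, _⟩ := Set.mem_iUnion₂.1 hp
    exact ⟨(hU ▸ Set.subset_union_left).trans hC, (hU ▸ Set.subset_union_right).trans hC,
      hsA, htB⟩
  · intro gc _ gc' _ hne
    refine Set.disjoint_left.2 fun p hp hp' => hne ?_
    exact Prod.ext (hp.2.2.2.symm.trans hp'.2.2.2) (hp.1.symm.trans hp'.1)
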